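/- Let U ⊆ ℝⁿ be open, let g : U → ℝ^{n×n} be smooth, symmetric and invertible, V : U → ℝ smooth, C : U × ℝⁿ → ℝⁿ smooth, and m ≤ n. Let κ ≠ 0 be a constant, let V° be a smooth function depending only on the variables x^{m+1},…,xⁿ, and let g° be a smooth symmetric matrix-valued function depending only on x^{m+1},…,xⁿ with g°_{ia} = 0 whenever a ≤ m. Then the basic solution λ_a^k = κ δ_a^k, ĝ = (1/κ) g + g°, V̂ = (1/κ) V + V°, Ĉ_j = (1/κ) C_j satisfies the λ-equations, the ĝ-equations, the V̂-equations, and the Ĉ-equations. -/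

import Mathlib

/-- Partial derivative in the `k`-th coordinate direction. -/
noncomputable def pd {n : ℕ} (k : Fin n) (f : (Fin n → ℝ) → ℝ) (x : Fin n → ℝ) : ℝ :=
  fderiv ℝ f x (Pi.single k 1)

/-- Christoffel symbol of the first kind `[ij,k]` of the matrix-valued map `g`. -/
noncomputable def chr {n : ℕ} (g : (Fin n → ℝ) → Matrix (Fin n) (Fin n) ℝ)
    (i j k : Fin n) (x : Fin n → ℝ) : ℝ :=
  (1/2) * (pd i (fun y => g y j k) x + pd j (fun y => g y i k) x - pd k (fun y => g y i j) x)

/-! Since `λ_a^k = κ δ_a^k` is constant, its derivatives vanish and contracting an index with `λ_a`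
evaluates it at `a` and multiplies by `κ`. The factor `κ` cancels the `κ⁻¹` in `ĝ`, `V̂` and `Ĉ`,
while `g°` and `V°` are killed by `∂/∂x^a`. The λ-equations become
`[ka,b] + [kb,a] = ∂g_{ab}/∂x^k`, the compatibility of the Christoffel symbols with `g`. -/

section Definitions

variable {n : ℕ} {α : Type*} (e : α → Fin n) (U : Set (Fin n → ℝ))

/-- The λ-equations on `U`. The index `a` of the paper, which runs over the first `m` coordinate
directions, runs here over any type `α` whose elements name coordinate directions through `e`. -/
def LambdaEquations (g : (Fin n → ℝ) → Matrix (Fin n) (Fin n) ℝ)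
    (lam : (Fin n → ℝ) → α → Fin n → ℝ) : Prop :=
  ∀ x ∈ U, ∀ (k : Fin n) (a b : α),
    pd k (fun y => ∑ i, g y (e a) i * lam y b i) x
      - ∑ i, chr g k (e a) i x * lam x b i - ∑ i, chr g k (e b) i x * lam x a i = 0

/-- The ĝ-equations on `U`, indexed as in `LambdaEquations`. -/
def GHatEquations (lam : (Fin n → ℝ) → α → Fin n → ℝ)
    (g gHat : (Fin n → ℝ) → Matrix (Fin n) (Fin n) ℝ) : Prop :=
  ∀ x ∈ U, ∀ (a : α) (i j : Fin n),
    ∑ l, lam x a l * pd l (fun y => gHat y i j) x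
      + ∑ l, pd i (fun y => lam y a l) x * gHat x l j
      + ∑ l, pd j (fun y => lam y a l) x * gHat x l i = pd (e a) (fun y => g y i j) x

/-- The V̂-equations on `U`, indexed as in `LambdaEquations`. -/
def VHatEquations (lam : (Fin n → ℝ) → α → Fin n → ℝ) (V VHat : (Fin n → ℝ) → ℝ) : Prop :=
  ∀ x ∈ U, ∀ a : α, ∑ j, lam x a j * pd j VHat x = pd (e a) V x

/-- The Ĉ-equations at all positions in `U` and all velocities, indexed as in
`LambdaEquations`. -/
def CHatEquations (lam : (Fin n → ℝ) → α → Fin n → ℝ)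
    (C CHat : (Fin n → ℝ) → (Fin n → ℝ) → Fin n → ℝ) : Prop :=
  ∀ x ∈ U, ∀ (v : Fin n → ℝ) (a : α), ∑ j, lam x a j * CHat x v j = C x v (e a)

/-- The λ-component `λ_a^k = κ δ_a^k` of the basic solution, as a constant function of the
position. -/
def basicLambda (κ : ℝ) : (Fin n → ℝ) → α → Fin n → ℝ :=
  fun _ a k => κ * if e a = k then 1 else 0

end Definitions

section PartialDerivative

open Topology

variable {n : ℕ} {f h : (Fin n → ℝ) → ℝ} {x : Fin n → ℝ}

theorem pd_const (k : Fin n) (c : ℝ) (x : Fin n → ℝ) : pd k (fun _ => c) x = 0 := by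
  simp [pd]

theorem pd_const_smul (k : Fin n) (c : ℝ) (f : (Fin n → ℝ) → ℝ) (x : Fin n → ℝ) :
    pd k (c • f) x = c * pd k f x := by
  simp [pd, fderiv_const_smul_field]

theorem pd_add (k : Fin n) (hf : DifferentiableAt ℝ f x) (hh : DifferentiableAt ℝ h x) :
    pd k (f + h) x = pd k f x + pd k h x := by
  simp [pd, fderiv_add hf hh]

theorem pd_congr (k : Fin n) (hfh : f =ᶠ[𝓝 x] h) : pd k f x = pd k h x := by
  simp only [pd, hfh.fderiv_eq]

theorem pd_eq_zero_of_dependsOn {s : Set (Fin n)} {k : Fin n} (hk : k ∉ s)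
    (hf : DifferentiableAt ℝ f x) (hdep : DependsOn f s) : pd k f x = 0 := by
  have hconst (t : ℝ) : f (x + t • Pi.single k 1) = f x :=
    hdep fun l hl => by simp [ne_of_mem_of_not_mem hl hk]
  simp only [pd, ← hf.lineDeriv_eq_fderiv, lineDeriv, hconst, deriv_const]

theorem pd_castLE_eq_zero {m : ℕ} (hmn : m ≤ n)
    (hf : DifferentiableAt ℝ f x) (hdep : DependsOn f {l | m ≤ (l : ℕ)}) (a : Fin m) :
    pd (Fin.castLE hmn a) f x = 0 :=
  pd_eq_zero_of_dependsOn (by simp) hf hdep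

theorem chr_add_chr_swap {g : (Fin n → ℝ) → Matrix (Fin n) (Fin n) ℝ}
    (hsymm : ∀ᶠ y in 𝓝 x, (g y).IsSymm) (k i j : Fin n) :
    chr g k i j x + chr g k j i x = pd k (fun y => g y i j) x := by
  have hswap : pd k (fun y => g y j i) x = pd k (fun y => g y i j) x :=
    pd_congr k (hsymm.mono fun _ hy => hy.apply i j)
  simp only [chr, hswap]
  ring

end PartialDerivative

section BasicSolution

variable {n : ℕ} {α : Type*} (e : α → Fin n) (κ : ℝ) {U : Set (Fin n → ℝ)}
  {g g₀ : (Fin n → ℝ) → Matrix (Fin n) (Fin n) ℝ} {V V₀ : (Fin n → ℝ) → ℝ}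

theorem sum_basicLambda_mul (x : Fin n → ℝ) (a : α) (w : Fin n → ℝ) :
    ∑ l, basicLambda e κ x a l * w l = κ * w (e a) := by
  simp [basicLambda]

theorem sum_mul_basicLambda (x : Fin n → ℝ) (a : α) (w : Fin n → ℝ) :
    ∑ l, w l * basicLambda e κ x a l = κ * w (e a) := by
  simp only [mul_comm (w _), sum_basicLambda_mul]

theorem pd_basicLambda (k : Fin n) (a : α) (l : Fin n) (x : Fin n → ℝ) :
    pd k (fun y => basicLambda e κ y a l) x = 0 :=
  pd_const k _ x

theorem lambdaEquations_basicLambda (hU : IsOpen U) (hg : ∀ x ∈ U, (g x).IsSymm) :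
    LambdaEquations e U g (basicLambda e κ) := by
  intro x hx k a b
  have hpd : pd k (fun y => κ * g y (e a) (e b)) x = κ * pd k (fun y => g y (e a) (e b)) x :=
    pd_const_smul k κ _ x
  have hchr := chr_add_chr_swap (Filter.eventually_of_mem (hU.mem_nhds hx) hg) k (e a) (e b)
  simp only [sum_mul_basicLambda, hpd, ← hchr]
  ring

variable {κ}

theorem sum_basicLambda_mul_pd (hκ : κ ≠ 0) {f f₀ : (Fin n → ℝ) → ℝ} {x : Fin n → ℝ} {a : α}
    (hf : DifferentiableAt ℝ f x) (hf₀ : DifferentiableAt ℝ f₀ x) (hpd : pd (e a) f₀ x = 0) :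
    ∑ l, basicLambda e κ x a l * pd l (κ⁻¹ • f + f₀) x = pd (e a) f x := by
  rw [sum_basicLambda_mul, pd_add _ (hf.const_smul κ⁻¹) hf₀, pd_const_smul, hpd, add_zero,
    mul_inv_cancel_left₀ hκ]

theorem gHatEquations_basicLambda (hκ : κ ≠ 0) (hU : IsOpen U)
    (hg : ∀ i j, DifferentiableOn ℝ (fun x => g x i j) U)
    (hg₀ : ∀ i j, DifferentiableOn ℝ (fun x => g₀ x i j) U)
    (hpd : ∀ x ∈ U, ∀ a i j, pd (e a) (fun y => g₀ y i j) x = 0) :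
    GHatEquations e U (basicLambda e κ) g (κ⁻¹ • g + g₀) := by
  intro x hx a i j
  have hUx := hU.mem_nhds hx
  simp only [pd_basicLambda, zero_mul, Finset.sum_const_zero, add_zero]
  exact sum_basicLambda_mul_pd e hκ ((hg i j).differentiableAt hUx)
    ((hg₀ i j).differentiableAt hUx) (hpd x hx a i j)

theorem vHatEquations_basicLambda (hκ : κ ≠ 0) (hU : IsOpen U) (hV : DifferentiableOn ℝ V U)
    (hV₀ : DifferentiableOn ℝ V₀ U) (hpd : ∀ x ∈ U, ∀ a, pd (e a) V₀ x = 0) :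
    VHatEquations e U (basicLambda e κ) V (κ⁻¹ • V + V₀) := by
  intro x hx a
  have hUx := hU.mem_nhds hx
  exact sum_basicLambda_mul_pd e hκ (hV.differentiableAt hUx) (hV₀.differentiableAt hUx)
    (hpd x hx a)

theorem cHatEquations_basicLambda (hκ : κ ≠ 0) (U : Set (Fin n → ℝ))
    (C : (Fin n → ℝ) → (Fin n → ℝ) → Fin n → ℝ) :
    CHatEquations e U (basicLambda e κ) C (κ⁻¹ • C) := by
  intro x _ v a
  rw [sum_basicLambda_mul]
  exact mul_inv_cancel_left₀ hκ (C x v (e a))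

theorem basic_solutions_solve_matching_general (hκ : κ ≠ 0) (hU : IsOpen U)
    (hg : ∀ i j, DifferentiableOn ℝ (fun x => g x i j) U) (hsymm : ∀ x ∈ U, (g x).IsSymm)
    (hV : DifferentiableOn ℝ V U) (C : (Fin n → ℝ) → (Fin n → ℝ) → Fin n → ℝ)
    (hV₀ : DifferentiableOn ℝ V₀ U) (hpdV₀ : ∀ x ∈ U, ∀ a, pd (e a) V₀ x = 0)
    (hg₀ : ∀ i j, DifferentiableOn ℝ (fun x => g₀ x i j) U)
    (hpdg₀ : ∀ x ∈ U, ∀ a i j, pd (e a) (fun y => g₀ y i j) x = 0) :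
    LambdaEquations e U g (basicLambda e κ) ∧
      GHatEquations e U (basicLambda e κ) g (κ⁻¹ • g + g₀) ∧
      VHatEquations e U (basicLambda e κ) V (κ⁻¹ • V + V₀) ∧
      CHatEquations e U (basicLambda e κ) C (κ⁻¹ • C) :=
  ⟨lambdaEquations_basicLambda e κ hU hsymm, gHatEquations_basicLambda e hκ hU hg hg₀ hpdg₀,
    vHatEquations_basicLambda e hκ hU hV hV₀ hpdV₀, cHatEquations_basicLambda e hκ U C⟩

end BasicSolution

/-- **Remark 2.2.**  The basic solutions `λ_a^k = κ δ_a^k`, `ĝ = κ⁻¹ g + g°`,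
`V̂ = κ⁻¹ V + V°`, `Ĉ = κ⁻¹ C` satisfy the λ-, ĝ-, V̂- and Ĉ-equations. -/
theorem basic_solutions_solve_matching
    {n m : ℕ} (hmn : m ≤ n) (U : Set (Fin n → ℝ)) (hUopen : IsOpen U)
    (g : (Fin n → ℝ) → Matrix (Fin n) (Fin n) ℝ)
    (hg : ∀ i j, ContDiffOn ℝ (⊤ : ℕ∞) (fun x => g x i j) U)
    (hgsym : ∀ x ∈ U, (g x).IsSymm)
    (hginv : ∀ x ∈ U, IsUnit (g x).det)
    (V : (Fin n → ℝ) → ℝ) (hV : ContDiffOn ℝ (⊤ : ℕ∞) V U)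
    (C : (Fin n → ℝ) → (Fin n → ℝ) → Fin n → ℝ)
    (hC : ∀ j, ContDiffOn ℝ (⊤ : ℕ∞) (fun p : (Fin n → ℝ) × (Fin n → ℝ) => C p.1 p.2 j)
      (U ×ˢ (Set.univ : Set (Fin n → ℝ))))
    (κ : ℝ) (hκ : κ ≠ 0)
    -- V° : smooth, depending only on the variables x^{m+1}, …, xⁿ
    (V0 : (Fin n → ℝ) → ℝ) (hV0 : ContDiff ℝ (⊤ : ℕ∞) V0)
    (hV0dep : ∀ x y : Fin n → ℝ, (∀ l : Fin n, m ≤ (l : ℕ) → x l = y l) → V0 x = V0 y)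
    -- g° : smooth symmetric, depending only on x^{m+1}, …, xⁿ, with g°_{ia} = 0 for a ≤ m
    (g0 : (Fin n → ℝ) → Matrix (Fin n) (Fin n) ℝ)
    (hg0 : ∀ i j, ContDiff ℝ (⊤ : ℕ∞) (fun x => g0 x i j))
    (hg0sym : ∀ x, (g0 x).IsSymm)
    (hg0dep : ∀ x y : Fin n → ℝ, (∀ l : Fin n, m ≤ (l : ℕ) → x l = y l) → g0 x = g0 y)
    (hg0a : ∀ x, ∀ i : Fin n, ∀ a : Fin n, (a : ℕ) < m → g0 x i a = 0) :
    -- λ-equations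
    (∀ x ∈ U, ∀ (k : Fin n) (a b : Fin m),
        pd k (fun y => ∑ i, g y (Fin.castLE hmn a) i *
            (κ * if (Fin.castLE hmn b : Fin n) = i then 1 else 0)) x
          - ∑ i, chr g k (Fin.castLE hmn a) i x *
              (κ * if (Fin.castLE hmn b : Fin n) = i then 1 else 0)
          - ∑ i, chr g k (Fin.castLE hmn b) i x *
              (κ * if (Fin.castLE hmn a : Fin n) = i then 1 else 0) = 0) ∧
    -- ĝ-equations, with ĝ = κ⁻¹ g + g°
    (∀ x ∈ U, ∀ (a : Fin m) (i j : Fin n),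
        ∑ l, (κ * if (Fin.castLE hmn a : Fin n) = l then 1 else 0) *
            pd l (fun y => κ⁻¹ * g y i j + g0 y i j) x
          + ∑ l, pd i (fun y => (κ * if (Fin.castLE hmn a : Fin n) = l then 1 else 0)) x *
              (κ⁻¹ * g x l j + g0 x l j)
          + ∑ l, pd j (fun y => (κ * if (Fin.castLE hmn a : Fin n) = l then 1 else 0)) x *
              (κ⁻¹ * g x l i + g0 x l i)
          = pd (Fin.castLE hmn a) (fun y => g y i j) x) ∧
    -- V̂-equations, with V̂ = κ⁻¹ V + V°
    (∀ x ∈ U, ∀ (a : Fin m),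
        ∑ j, (κ * if (Fin.castLE hmn a : Fin n) = j then 1 else 0) *
            pd j (fun y => κ⁻¹ * V y + V0 y) x
          = pd (Fin.castLE hmn a) V x) ∧
    -- Ĉ-equations, with Ĉ_j = κ⁻¹ C_j
    (∀ x ∈ U, ∀ (v : Fin n → ℝ) (a : Fin m),
        ∑ j, (κ * if (Fin.castLE hmn a : Fin n) = j then 1 else 0) * (κ⁻¹ * C x v j)
          = C x v (Fin.castLE hmn a)) := by
  have hg0' (i j) : Differentiable ℝ (fun x => g0 x i j) := (hg0 i j).differentiable (by simp)
  have hV0' : Differentiable ℝ V0 := hV0.differentiable (by simp)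
  exact basic_solutions_solve_matching_general (Fin.castLE hmn) hκ hUopen
    (fun i j => (hg i j).differentiableOn (by simp)) hgsym (hV.differentiableOn (by simp)) C
    hV0'.differentiableOn (fun x _ => pd_castLE_eq_zero hmn (hV0' x) @hV0dep)
    (fun i j => (hg0' i j).differentiableOn)
    (fun x _ a i j => pd_castLE_eq_zero hmn (hg0' i j x)
      (fun y z hyz => congrFun₂ (hg0dep y z hyz) i j) a)
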